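/- Let A_n = [a_n, b_n] be a sequence of compact intervals in ℝ with b_n − a_n → ∞ and such that 0 ∈ A_n for all n. Then the counting autocorrelation of ℙ with respect to (A_n) exists and equals δ_0, i.e., writing F_n = ℙ ∩ A_n, for every continuous compactly supported f : ℝ → ℂ one has (1/card F_n)·Σ_{x,y∈F_n} f(x−y) → f(0) as n → ∞ (the expression being interpreted as 0 when F_n = ∅). -/

import Mathlib

open Filter Topology Set

/-- The set of prime numbers together with their negatives, as a subset of `ℝ`. -/
def PrimesR : Set ℝ := {x | ∃ p : ℕ, p.Prime ∧ (x = (p : ℝ) ∨ x = -(p : ℝ))}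

/-- The (counting-normalised) autocorrelation sum of the finite sample `F` applied to a
test function `f`; interpreted as `0` when `F = ∅` (since then `(F.ncard : ℂ)⁻¹ = 0`). -/
noncomputable def autoCorr (F : Set ℝ) (f : ℝ → ℂ) : ℂ :=
  ((F.ncard : ℂ))⁻¹ * ∑ᶠ x ∈ F, ∑ᶠ y ∈ F, f (x - y)


lemma bonf {α : Type*} [DecidableEq α] (A : Finset α) (k : ℕ) :
    (if A = ∅ then 1 else 0 : ℝ) ≤ ∑ D ∈ A.powerset with D.card ≤ 2 * k, (-1 : ℝ) ^ D.card := by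
  have key : ∑ D ∈ A.powerset with D.card ≤ 2 * k, (-1 : ℝ) ^ D.card
      = ∑ i ∈ Finset.range (2 * k + 1), (-1 : ℝ) ^ i * (A.card.choose i : ℝ) := by
    rw [← Finset.sum_fiberwise_of_maps_to (g := Finset.card) (t := Finset.range (2 * k + 1))]
    · refine Finset.sum_congr rfl fun i hi => ?_
      have : (A.powerset.filter (fun D => D.card ≤ 2 * k)).filter (fun D => D.card = i)
          = A.powersetCard i := by
        ext D
        simp only [Finset.mem_filter, Finset.mem_powerset, Finset.mem_powersetCard, Finset.mem_range] at hi ⊢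
        constructor
        · rintro ⟨⟨h, _⟩, h2⟩; exact ⟨h, h2⟩
        · rintro ⟨h, h2⟩; exact ⟨⟨h, by omega⟩, h2⟩
      rw [this, Finset.sum_congr rfl (g := fun _ => (-1 : ℝ) ^ i)]
      · simp [mul_comm]
      · intro D hD; rw [(Finset.mem_powersetCard.1 hD).2]
    · intro D hD
      simp at hD ⊢; omega
  rw [key]
  by_cases hA : A = ∅
  · subst hA
    simp [Finset.sum_range_succ']
  · rw [if_neg hA]
    obtain ⟨n, hn⟩ : ∃ n, A.card = n + 1 := ⟨A.card - 1, by
      have := Finset.card_pos.2 (Finset.nonempty_iff_ne_empty.2 hA); omega⟩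
    rw [hn]
    have := @Int.alternating_sum_range_choose_eq_choose n (2 * k)
    have h2 : ((∑ i ∈ Finset.range (2 * k + 1), ((-1) ^ i * ((n + 1).choose i) : ℤ) : ℤ) : ℝ)
      = (((-1) ^ (2 * k) * (n.choose (2 * k)) : ℤ) : ℝ) := by exact_mod_cast this
    push_cast at h2
    rw [h2]
    simp

lemma base_count (M q : ℕ) (hq : 0 < q) (c : ℤ) :
    |(((Finset.Ico (-(M:ℤ)) (M+1)).filter (fun l => l ≡ c [ZMOD q])).card : ℝ)
      - (2 * M + 1) / q| ≤ 1 := by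
  have h := Int.Ico_filter_modEq_card (-(M:ℤ)) (M+1) (r := q) (by exact_mod_cast hq) c
  have hq' : (0:ℚ) < q := by exact_mod_cast hq
  set X : ℚ := (((M+1 : ℤ) : ℚ) - c) / ((q:ℤ):ℚ)
  set Y : ℚ := (((-(M:ℤ) : ℤ) : ℚ) - c) / ((q:ℤ):ℚ)
  have hXY : X - Y = (2 * M + 1) / q := by
    simp only [X, Y]; push_cast; field_simp; ring
  have hle : Y ≤ X := by
    have : 0 ≤ X - Y := by rw [hXY]; positivity
    linarith
  rw [max_eq_left (by have := Int.ceil_mono hle; omega)] at h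
  have h1 := Int.le_ceil X
  have h2 := Int.ceil_lt_add_one X
  have h3 := Int.le_ceil Y
  have h4 := Int.ceil_lt_add_one Y
  have : |(((Finset.Ico (-(M:ℤ)) (M+1)).filter (fun l => l ≡ c [ZMOD q])).card : ℚ)
      - (2 * M + 1) / q| ≤ 1 := by
    have h' : (((Finset.Ico (-(M:ℤ)) (M+1)).filter (fun l => l ≡ c [ZMOD q])).card : ℚ)
      = (⌈X⌉ : ℚ) - ⌈Y⌉ := by exact_mod_cast h
    rw [h', ← hXY, abs_le]
    constructor <;> linarith
  have h5 := (Rat.cast_le (K := ℝ)).2 this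
  push_cast at h5
  exact h5

lemma crt_int (p q : ℕ) (h : Nat.Coprime q p) (c e : ℤ) : ∃ c' : ℤ, ∀ l : ℤ,
    (l ≡ c [ZMOD q] ∧ l ≡ e [ZMOD p]) ↔ l ≡ c' [ZMOD (q * p : ℕ)] := by
  have hc : IsCoprime (q:ℤ) (p:ℤ) := Nat.isCoprime_iff_coprime.2 h
  obtain ⟨u, v, huv⟩ := hc
  refine ⟨c * (v * p) + e * (u * q), fun l => ?_⟩
  have h1 : c * (v * p) + e * (u * q) ≡ c [ZMOD q] := by
    rw [Int.modEq_iff_dvd]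
    exact ⟨u * (c - e), by linear_combination (-c) * huv⟩
  have h2 : c * (v * p) + e * (u * q) ≡ e [ZMOD p] := by
    rw [Int.modEq_iff_dvd]
    exact ⟨v * (e - c), by linear_combination (-e) * huv⟩
  push_cast
  rw [← Int.modEq_and_modEq_iff_modEq_mul (by simpa using h)]
  constructor
  · rintro ⟨a, b⟩; exact ⟨a.trans h1.symm, b.trans h2.symm⟩
  · rintro ⟨a, b⟩; exact ⟨a.trans h1, b.trans h2⟩

lemma count_D (d : ℤ) (M : ℕ) (D : Finset ℕ) :
    (∀ p ∈ D, p.Prime ∧ ¬ (p:ℤ) ∣ d) → ∀ (q : ℕ), 0 < q → (∀ p ∈ D, Nat.Coprime q p) → ∀ c : ℤ,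
    |(((Finset.Ico (-(M:ℤ)) (M+1)).filter
      (fun l => l ≡ c [ZMOD q] ∧ ∀ p ∈ D, (p:ℤ) ∣ l * (l + d))).card : ℝ)
      - 2 ^ D.card * (2 * M + 1) / (q * ∏ p ∈ D, (p:ℝ))| ≤ 2 ^ D.card := by
  induction D using Finset.induction_on with
  | empty =>
    intro _ q hq _ c
    simpa using base_count M q hq c
  | insert p D hp ih =>
    intro hD q hq hcop c
    have hpp := (hD p (by simp)).1
    have hpd := (hD p (by simp)).2
    have hqp := hcop p (by simp)
    have hD' : ∀ p ∈ D, p.Prime ∧ ¬ (p:ℤ) ∣ d := fun r hr => hD r (by simp [hr])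
    have hcop' : ∀ r ∈ D, Nat.Coprime (q * p) r := fun r hr =>
      Nat.Coprime.mul_left (hcop r (by simp [hr]))
        ((Nat.coprime_primes hpp (hD' r hr).1).2 (by rintro rfl; exact hp hr))
    obtain ⟨c1, hc1⟩ := crt_int p q hqp c 0
    obtain ⟨c2, hc2⟩ := crt_int p q hqp c (-d)
    have i1 := ih hD' (q * p) (Nat.mul_pos hq hpp.pos) hcop' c1
    have i2 := ih hD' (q * p) (Nat.mul_pos hq hpp.pos) hcop' c2
    have e0 : ∀ l : ℤ, l ≡ 0 [ZMOD p] ↔ (p:ℤ) ∣ l := fun l => Int.modEq_zero_iff_dvd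
    have ed : ∀ l : ℤ, l ≡ -d [ZMOD p] ↔ (p:ℤ) ∣ l + d := fun l => by
      rw [Int.modEq_comm, Int.modEq_iff_dvd]; simp
    have hpI : Prime (p:ℤ) := Nat.prime_iff_prime_int.1 hpp
    have hsplit : (Finset.Ico (-(M:ℤ)) (M+1)).filter
      (fun l => l ≡ c [ZMOD q] ∧ ∀ r ∈ insert p D, (r:ℤ) ∣ l * (l + d)) =
      ((Finset.Ico (-(M:ℤ)) (M+1)).filter
      (fun l => l ≡ c1 [ZMOD (q * p : ℕ)] ∧ ∀ r ∈ D, (r:ℤ) ∣ l * (l + d))) ∪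
      ((Finset.Ico (-(M:ℤ)) (M+1)).filter
      (fun l => l ≡ c2 [ZMOD (q * p : ℕ)] ∧ ∀ r ∈ D, (r:ℤ) ∣ l * (l + d))) := by
      ext l
      simp only [Finset.mem_union, Finset.mem_filter, Finset.forall_mem_insert, ← hc1, ← hc2, e0, ed,
        hpI.dvd_mul]
      tauto
    have hdisj : Disjoint ((Finset.Ico (-(M:ℤ)) (M+1)).filter
      (fun l => l ≡ c1 [ZMOD (q * p : ℕ)] ∧ ∀ r ∈ D, (r:ℤ) ∣ l * (l + d))) 
      ((Finset.Ico (-(M:ℤ)) (M+1)).filter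
      (fun l => l ≡ c2 [ZMOD (q * p : ℕ)] ∧ ∀ r ∈ D, (r:ℤ) ∣ l * (l + d))) := by
      rw [Finset.disjoint_left]
      intro l h1 h2
      simp only [Finset.mem_filter, ← hc1, ← hc2, e0, ed] at h1 h2
      exact hpd ((dvd_add_right h1.2.1.2).1 h2.2.1.2)
    rw [hsplit, Finset.card_union_of_disjoint hdisj, Finset.card_insert_of_notMem hp,
      Finset.prod_insert hp]
    push_cast at i1 i2 ⊢
    have : (2:ℝ) ^ (D.card + 1) * (2 * M + 1) / (q * (p * ∏ p ∈ D, (p:ℝ)))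
      = 2 ^ D.card * (2 * M + 1) / (q * p * ∏ p ∈ D, (p:ℝ)) + 2 ^ D.card * (2 * M + 1) / (q * p * ∏ p ∈ D, (p:ℝ)) := by
      rw [← mul_assoc, pow_succ]; ring
    rw [this, pow_succ]
    rw [abs_le] at *
    constructor <;> linarith [i1.1, i1.2, i2.1, i2.2]

lemma sieve1 (d : ℤ) (M k : ℕ) (P : Finset ℕ) (hP : ∀ p ∈ P, p.Prime ∧ ¬ (p:ℤ) ∣ d) :
    (((Finset.Ico (-(M:ℤ)) (M+1)).filter (fun l => ∀ p ∈ P, ¬ (p:ℤ) ∣ l * (l + d))).card : ℝ)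
    ≤ ∑ D ∈ P.powerset with D.card ≤ 2 * k,
      ((2 * M + 1) * ((-1) ^ D.card * (2 ^ D.card / ∏ p ∈ D, (p:ℝ))) + 2 ^ D.card) := by
  classical
  set I := Finset.Ico (-(M:ℤ)) (M+1)
  calc ((I.filter (fun l => ∀ p ∈ P, ¬ (p:ℤ) ∣ l * (l + d))).card : ℝ)
      = ∑ l ∈ I, (if P.filter (fun p : ℕ => (p:ℤ) ∣ l * (l+d)) = ∅ then 1 else 0 : ℝ) := by
        rw [Finset.card_filter]; push_cast
        refine Finset.sum_congr rfl fun l _ => ?_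
        simp only [Finset.filter_eq_empty_iff]
    _ ≤ ∑ l ∈ I, ∑ D ∈ (P.filter (fun p : ℕ => (p:ℤ) ∣ l * (l+d))).powerset with D.card ≤ 2 * k,
          (-1 : ℝ) ^ D.card := Finset.sum_le_sum fun l _ => bonf _ k
    _ = ∑ l ∈ I, ∑ D ∈ P.powerset with D.card ≤ 2 * k,
          (if ∀ p ∈ D, (p:ℤ) ∣ l * (l+d) then (-1 : ℝ) ^ D.card else 0) := by
        refine Finset.sum_congr rfl fun l _ => ?_
        rw [← Finset.sum_filter]
        refine Finset.sum_congr ?_ fun _ _ => rfl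
        ext D
        simp only [Finset.mem_filter, Finset.mem_powerset, Finset.subset_iff]
        constructor
        · rintro ⟨h1, h2⟩
          exact ⟨⟨fun x hx => (h1 hx).1, h2⟩, fun x hx => (h1 hx).2⟩
        · rintro ⟨⟨h1, h2⟩, h3⟩
          exact ⟨fun x hx => ⟨h1 hx, h3 x hx⟩, h2⟩
    _ = ∑ D ∈ P.powerset with D.card ≤ 2 * k, (-1 : ℝ) ^ D.card *
          ((I.filter (fun l => ∀ p ∈ D, (p:ℤ) ∣ l * (l+d))).card : ℝ) := by
        rw [Finset.sum_comm]
        refine Finset.sum_congr rfl fun D _ => ?_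
        rw [← Finset.sum_filter, Finset.sum_const, nsmul_eq_mul, mul_comm]
    _ ≤ _ := by
        refine Finset.sum_le_sum fun D hD => ?_
        have hDP : D ⊆ P := Finset.mem_powerset.1 (Finset.mem_filter.1 hD).1
        have h := count_D d M D (fun p hp => hP p (hDP hp)) 1 one_pos (by simp) 0
        simp only [Nat.cast_one, Int.modEq_one, true_and, one_mul] at h
        set N : ℝ := ((I.filter (fun l => ∀ p ∈ D, (p:ℤ) ∣ l * (l+d))).card : ℝ)
        have h2 : (-1:ℝ) ^ D.card * (N - 2 ^ D.card * (2 * M + 1) / ∏ p ∈ D, (p:ℝ)) ≤ 2 ^ D.card := by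
          refine (le_abs_self _).trans ?_
          rw [abs_mul]; simpa using h
        have h3 : (-1:ℝ) ^ D.card * (2 ^ D.card * (2 * M + 1) / ∏ p ∈ D, (p:ℝ)) =
          (2 * M + 1) * ((-1) ^ D.card * (2 ^ D.card / ∏ p ∈ D, (p:ℝ))) := by ring
        linarith

lemma sieve2 (d : ℤ) (M k : ℕ) (P : Finset ℕ) (hP : ∀ p ∈ P, p.Prime ∧ ¬ (p:ℤ) ∣ d)
    (Z : ℝ) (hZ : 1 ≤ Z) (hPZ : (P.card : ℝ) ≤ Z) :
    (((Finset.Ico (-(M:ℤ)) (M+1)).filter (fun l => ∀ p ∈ P, ¬ (p:ℤ) ∣ l * (l + d))).card : ℝ)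
    ≤ (2 * M + 1) * (Real.exp (-2 * ∑ p ∈ P, (1:ℝ) / p)
        + Real.exp (6 * (∑ p ∈ P, (1:ℝ) / p) - 2 * k)) + Real.exp 2 * Z ^ (2 * k) := by
  refine (sieve1 d M k P hP).trans ?_
  rw [Finset.sum_add_distrib, ← Finset.mul_sum]
  have hZ0 : 0 < Z := by linarith
  refine add_le_add (mul_le_mul_of_nonneg_left ?_ (by positivity)) ?_
  · have hfull : ∑ D ∈ P.powerset, ((-1:ℝ) ^ D.card * (2 ^ D.card / ∏ p ∈ D, (p:ℝ)))
        = ∏ p ∈ P, (1 + (-2 / (p:ℝ))) := by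
      rw [Finset.prod_one_add]
      refine Finset.sum_congr rfl fun D _ => ?_
      rw [Finset.prod_div_distrib, Finset.prod_const, ← mul_div_assoc, ← mul_pow]; norm_num
    have h1 : ∏ p ∈ P, (1 + (-2 / (p:ℝ))) ≤ Real.exp (-2 * ∑ p ∈ P, (1:ℝ) / p) := by
      rw [Finset.mul_sum, Real.exp_sum]
      refine Finset.prod_le_prod (fun p hp => ?_) (fun p hp => ?_)
      · have : (2:ℝ) ≤ p := by exact_mod_cast (hP p hp).1.two_le
        rw [neg_div]
        have : 2 / (p:ℝ) ≤ 1 := by rw [div_le_one (by linarith)]; exact this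
        linarith
      · have := Real.add_one_le_exp (-2 * (1 / (p:ℝ)))
        calc _ = -2 * (1 / (p:ℝ)) + 1 := by ring
          _ ≤ _ := this
    have h2 : ∑ D ∈ P.powerset, (Real.exp (-(2 * k)) * ∏ p ∈ D, (6 / (p:ℝ)))
        ≤ Real.exp (6 * (∑ p ∈ P, (1:ℝ) / p) - 2 * k) := by
      rw [← Finset.mul_sum, ← Finset.prod_one_add, sub_eq_add_neg, add_comm, Real.exp_add,
        Finset.mul_sum, Real.exp_sum]
      refine mul_le_mul_of_nonneg_left (Finset.prod_le_prod (fun p _ => by positivity) fun p _ => ?_)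
        (Real.exp_pos _).le
      have := Real.add_one_le_exp (6 * (1 / (p:ℝ)))
      calc _ = 6 * (1 / (p:ℝ)) + 1 := by ring
        _ ≤ _ := this
    refine le_trans ?_ (add_le_add (hfull.le.trans h1) h2)
    rw [← Finset.sum_add_distrib, Finset.sum_filter]
    refine Finset.sum_le_sum fun D hD => ?_
    have hpos : 0 ≤ ∏ p ∈ D, (6 / (p:ℝ)) := Finset.prod_nonneg fun p _ => by positivity
    split_ifs with h
    · have := mul_nonneg (Real.exp_pos (-(2 * k : ℝ))).le hpos
      linarith
    · push Not at h
      have hp0 : 0 ≤ ∏ p ∈ D, (p:ℝ) := Finset.prod_nonneg fun p _ => by positivity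
      have ha : -(2 ^ D.card / ∏ p ∈ D, (p:ℝ)) ≤ (-1:ℝ) ^ D.card * (2 ^ D.card / ∏ p ∈ D, (p:ℝ)) := by
        refine (abs_le.1 (le_of_eq ?_)).1
        rw [abs_mul, abs_of_nonneg (by positivity : 0 ≤ 2 ^ D.card / ∏ p ∈ D, (p:ℝ))]; simp
      have hb : 2 ^ D.card / ∏ p ∈ D, (p:ℝ) ≤ Real.exp (-(2 * k)) * ∏ p ∈ D, (6 / (p:ℝ)) := by
        rw [Finset.prod_div_distrib, Finset.prod_const, ← mul_div_assoc]
        refine div_le_div_of_nonneg_right ?_ hp0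
        have h3 : (6:ℝ) ^ D.card = 3 ^ D.card * 2 ^ D.card := by rw [← mul_pow]; norm_num
        have h4 : (1:ℝ) ≤ Real.exp (-(2 * k)) * 3 ^ D.card := by
          have e1 : Real.exp (D.card) ≤ 3 ^ D.card := by
            rw [← Real.exp_one_pow]
            exact pow_le_pow_left₀ (Real.exp_pos _).le (by linarith [Real.exp_one_lt_d9]) _
          have e2 : (1:ℝ) ≤ Real.exp (-(2 * k)) * Real.exp (D.card) := by
            rw [← Real.exp_add]; apply Real.one_le_exp
            have : (2 * k : ℝ) ≤ D.card := by exact_mod_cast h.le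
            linarith
          exact e2.trans (mul_le_mul_of_nonneg_left e1 (Real.exp_pos _).le)
        rw [h3, ← mul_assoc]
        exact le_mul_of_one_le_left (by positivity) h4
      linarith
  · have h2 : ∑ D ∈ P.powerset, (Z ^ (2 * k) * ∏ p ∈ D, (2 / Z)) ≤ Real.exp 2 * Z ^ (2 * k) := by
      rw [← Finset.mul_sum, ← Finset.prod_one_add, mul_comm, Finset.prod_const]
      refine mul_le_mul_of_nonneg_right ?_ (by positivity)
      calc (1 + 2 / Z) ^ P.card ≤ Real.exp (2 / Z) ^ P.card :=
            pow_le_pow_left₀ (by positivity) (by linarith [Real.add_one_le_exp (2 / Z)]) _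
        _ = Real.exp (P.card * (2 / Z)) := by rw [Real.exp_nat_mul]
        _ ≤ Real.exp 2 := by
            apply Real.exp_le_exp.2
            rw [← mul_div_assoc, div_le_iff₀ hZ0]; linarith
    refine le_trans ?_ h2
    refine le_trans (Finset.sum_le_sum (g := fun D => Z ^ (2 * k) * ∏ p ∈ D, (2 / Z)) fun D hD => ?_)
      (Finset.sum_le_sum_of_subset_of_nonneg (Finset.filter_subset _ _) fun D _ _ => by positivity)
    have hc := (Finset.mem_filter.1 hD).2
    rw [Finset.prod_const, div_pow, ← mul_div_assoc, le_div_iff₀ (by positivity), mul_comm]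
    exact mul_le_mul_of_nonneg_right (pow_le_pow_right₀ hZ hc) (by positivity)

lemma telescope (N : ℕ) : ∑ n ∈ Finset.range N, (1 / ((n:ℝ) + 1) - 1 / ((n:ℝ) + 2)) ≤ 1 := by
  have h : ∀ N : ℕ, ∑ n ∈ Finset.range N, (1 / ((n:ℝ) + 1) - 1 / ((n:ℝ) + 2)) = 1 - 1 / ((N:ℝ) + 1) := by
    intro N
    induction N with
    | zero => simp
    | succ n ih => rw [Finset.sum_range_succ, ih]; push_cast; ring
  rw [h]
  have : 0 ≤ 1 / ((N:ℝ) + 1) := by positivity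
  linarith

lemma mertens_lower (N : ℕ) (hN : 2 ≤ N) :
    Real.log (Real.log N) - 1 ≤ ∑ p ∈ N.primesBelow, (1:ℝ) / p := by
  let f : ℕ →* ℝ := ⟨⟨fun n => (n:ℝ)⁻¹, by simp⟩, by intro a b; push_cast; rw [mul_inv]⟩
  have hfv : ∀ n, f n = (n:ℝ)⁻¹ := fun n => rfl
  have hf : ∀ {p : ℕ}, p.Prime → ‖f p‖ < 1 := by
    intro p hp
    rw [hfv, norm_inv, Real.norm_natCast]
    exact inv_lt_one_of_one_lt₀ (by exact_mod_cast hp.one_lt)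
  obtain ⟨-, hs⟩ := EulerProduct.summable_and_hasSum_smoothNumbers_prod_primesBelow_geometric hf N
  have h1 : Real.log N ≤ ∏ p ∈ N.primesBelow, (1 - f p)⁻¹ := by
    have hharm := log_add_one_le_harmonic (N - 1)
    have hN1 : ((N - 1 : ℕ) : ℝ) + 1 = N := by
      have : N - 1 + 1 = N := by omega
      exact_mod_cast this
    rw [Nat.cast_add, Nat.cast_one, hN1] at hharm
    refine hharm.trans ?_
    let e : Fin (N-1) → N.smoothNumbers := fun i =>
      ⟨i.1 + 1, Nat.mem_smoothNumbers_of_lt (by omega) (by omega)⟩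
    have he : Function.Injective e := by
      intro i j h
      have : i.1 + 1 = j.1 + 1 := congrArg Subtype.val h
      exact Fin.ext (by omega)
    have h2 := sum_le_hasSum (Finset.univ.map ⟨e, he⟩)
      (fun i _ => by rw [hfv]; positivity) hs
    refine le_trans (le_of_eq ?_) h2
    rw [Finset.sum_map, harmonic, Finset.sum_range]
    push_cast
    refine Finset.sum_congr rfl fun i _ => ?_
    simp [e, hfv]
  have h2 : ∏ p ∈ N.primesBelow, (1 - f p)⁻¹ ≤ Real.exp (∑ p ∈ N.primesBelow, (1:ℝ) / p + 1) := by
    have hA : ∏ p ∈ N.primesBelow, (1 - f p)⁻¹ ≤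
        ∏ p ∈ N.primesBelow, Real.exp (1 / (p:ℝ) + (1 / ((p:ℝ) - 1) - 1 / p)) := by
      refine Finset.prod_le_prod (fun p hp => ?_) (fun p hp => ?_)
      · have hpp := Nat.prime_of_mem_primesBelow hp
        have := hf hpp
        have := (abs_lt.1 this).2
        exact inv_nonneg.2 (by linarith)
      · have hpp := Nat.prime_of_mem_primesBelow hp
        have h2 : (2:ℝ) ≤ p := by exact_mod_cast hpp.two_le
        have h3 := Real.add_one_le_exp (1 / ((p:ℝ) - 1))
        have h4 : (1:ℝ) / p + (1 / ((p:ℝ) - 1) - 1 / p) = 1 / ((p:ℝ) - 1) := by ring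
        rw [h4]
        refine le_trans (le_of_eq ?_) h3
        rw [hfv]
        have : (p:ℝ) - 1 ≠ 0 := by linarith
        have : (p:ℝ) ≠ 0 := by linarith
        field_simp
        ring
    refine hA.trans ?_
    rw [← Real.exp_sum, Finset.sum_add_distrib]
    refine Real.exp_le_exp.2 (add_le_add le_rfl ?_)
    refine le_trans ?_ (telescope N)
    have : ∑ p ∈ N.primesBelow, (1 / ((p:ℝ) - 1) - 1 / p) =
        ∑ n ∈ N.primesBelow.image (fun p : ℕ => (p - 2 : ℕ)), (1 / ((n:ℝ) + 1) - 1 / ((n:ℝ) + 2)) := by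
      rw [Finset.sum_image]
      · refine Finset.sum_congr rfl fun p hp => ?_
        have hpp := (Nat.prime_of_mem_primesBelow hp).two_le
        rw [Nat.cast_sub hpp]; push_cast; ring
      · intro p hp q hq h
        have := (Nat.prime_of_mem_primesBelow hp).two_le
        have := (Nat.prime_of_mem_primesBelow hq).two_le
        simp only at h
        omega
    rw [this]
    refine Finset.sum_le_sum_of_subset_of_nonneg ?_ ?_
    · intro n hn
      obtain ⟨p, hp, rfl⟩ := Finset.mem_image.1 hn
      have := Nat.lt_of_mem_primesBelow hp
      rw [Finset.mem_range]; omega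
    · intro n _ _
      rw [sub_nonneg]
      exact one_div_le_one_div_of_le (by positivity) (by linarith)
  have hlog : 0 < Real.log N := Real.log_pos (by exact_mod_cast (by omega : 1 < N))
  have := Real.log_le_log hlog (h1.trans h2)
  rw [Real.log_exp] at this
  linarith

lemma trunc (w : ℕ → ℝ) (hw : ∀ n, 0 ≤ w n ∧ w n ≤ 1) (T : ℝ) (hT : 0 ≤ T) (P : Finset ℕ) :
    T ≤ ∑ p ∈ P, w p → ∃ P' ⊆ P, T ≤ ∑ p ∈ P', w p ∧ ∑ p ∈ P', w p ≤ T + 1 := by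
  induction P using Finset.induction_on with
  | empty => intro h; exact ⟨∅, le_rfl, h, by simp; linarith⟩
  | insert p P hp ih =>
    intro h
    by_cases h2 : T ≤ ∑ p ∈ P, w p
    · obtain ⟨P', h3, h4⟩ := ih h2
      exact ⟨P', h3.trans (Finset.subset_insert _ _), h4⟩
    · refine ⟨_, le_rfl, h, ?_⟩
      rw [Finset.sum_insert hp]
      linarith [(hw p).2]

noncomputable def pairSet (d : ℤ) (M : ℕ) : Finset ℤ :=
  (Finset.Ico (-(M:ℤ)) (M+1)).filter (fun l => l.natAbs.Prime ∧ (l + d).natAbs.Prime)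

lemma pair_bound (d : ℤ) (hd : d ≠ 0) (M Z k : ℕ) (hZ : 2 ≤ Z) (T : ℝ) (hT : 0 ≤ T)
    (hTZ : T ≤ Real.log (Real.log Z) - 1 - d.natAbs) :
    ((pairSet d M).card : ℝ) ≤ 4 * Z + (2 * M + 1) * (Real.exp (-2 * T) + Real.exp (6 * (T + 1) - 2 * k))
      + Real.exp 2 * (Z:ℝ) ^ (2 * k) := by
  classical
  have hw : ∀ n : ℕ, 0 ≤ (1:ℝ) / n ∧ (1:ℝ) / n ≤ 1 := fun n => by
    refine ⟨by positivity, ?_⟩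
    rcases Nat.eq_zero_or_pos n with rfl | h
    · simp
    · rw [div_le_one (by positivity)]; exact_mod_cast h
  have hS : T ≤ ∑ p ∈ Z.primesBelow.filter (fun p : ℕ => ¬ (p:ℤ) ∣ d), (1:ℝ) / p := by
    have h1 := mertens_lower Z hZ
    rw [← Finset.sum_filter_add_sum_filter_not _ (fun p : ℕ => (p:ℤ) ∣ d)] at h1
    have h2 : ∑ p ∈ Z.primesBelow.filter (fun p : ℕ => (p:ℤ) ∣ d), (1:ℝ) / p ≤ d.natAbs := by
      have h3 : Z.primesBelow.filter (fun p : ℕ => (p:ℤ) ∣ d) ⊆ Finset.Icc 1 d.natAbs := by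
        intro p hp
        rw [Finset.mem_filter] at hp
        rw [Finset.mem_Icc]
        exact ⟨(Nat.prime_of_mem_primesBelow hp.1).pos,
          Nat.le_of_dvd (Int.natAbs_pos.2 hd) (Int.natCast_dvd.1 hp.2)⟩
      calc _ ≤ ∑ p ∈ Z.primesBelow.filter (fun p : ℕ => (p:ℤ) ∣ d), (1:ℝ) :=
            Finset.sum_le_sum fun p _ => (hw p).2
        _ = ((Z.primesBelow.filter (fun p : ℕ => (p:ℤ) ∣ d)).card : ℝ) := by simp
        _ ≤ ((Finset.Icc 1 d.natAbs).card : ℝ) := by exact_mod_cast Finset.card_le_card h3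
        _ = _ := by simp
    linarith
  obtain ⟨P, hP, hP1, hP2⟩ := trunc (fun p => (1:ℝ) / p) hw T hT _ hS
  have hPp : ∀ p ∈ P, p.Prime ∧ ¬ (p:ℤ) ∣ d := fun p hp => by
    have := Finset.mem_filter.1 (hP hp)
    exact ⟨Nat.prime_of_mem_primesBelow this.1, this.2⟩
  have hPlt : ∀ p ∈ P, p < Z := fun p hp => 
    Nat.lt_of_mem_primesBelow (Finset.mem_filter.1 (hP hp)).1
  have hPc : (P.card : ℝ) ≤ Z := by
    have : P ⊆ Finset.range Z := fun p hp => Finset.mem_range.2 (hPlt p hp)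
    have := Finset.card_le_card this
    rw [Finset.card_range] at this
    exact_mod_cast this
  have hs := sieve2 d M k P hPp Z (by exact_mod_cast (by omega : 1 ≤ Z)) hPc
  have hsub : pairSet d M ⊆ (Finset.Ioo (-(Z:ℤ)) Z ∪ Finset.Ioo (-(Z:ℤ) - d) (Z - d)) ∪
     ((Finset.Ico (-(M:ℤ)) (M+1)).filter (fun l => ∀ p ∈ P, ¬ (p:ℤ) ∣ l * (l + d))) := by
    intro l hl
    obtain ⟨hl1, hl2, hl3⟩ := Finset.mem_filter.1 hl
    simp only [Finset.mem_union, Finset.mem_Ioo, Finset.mem_filter]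
    by_cases ha : l.natAbs < Z
    · left; left; omega
    by_cases hb : (l + d).natAbs < Z
    · left; right; omega
    right
    refine ⟨hl1, fun p hp hdvd => ?_⟩
    have hpp := (hPp p hp).1
    have hlt := hPlt p hp
    rcases (Nat.prime_iff_prime_int.1 hpp).dvd_mul.1 hdvd with h | h
    · have := (Nat.prime_dvd_prime_iff_eq hpp hl2).1 (Int.natCast_dvd.1 h); omega
    · have := (Nat.prime_dvd_prime_iff_eq hpp hl3).1 (Int.natCast_dvd.1 h); omega
  have hcard := (Finset.card_le_card hsub).trans ((Finset.card_union_le _ _).trans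
    (Nat.add_le_add_right (Finset.card_union_le _ _) _))
  rw [Int.card_Ioo, Int.card_Ioo] at hcard
  have hcard' : (pairSet d M).card ≤ 4 * Z + ((Finset.Ico (-(M:ℤ)) (M+1)).filter (fun l => ∀ p ∈ P, ¬ (p:ℤ) ∣ l * (l + d))).card := by
    refine hcard.trans (Nat.add_le_add_right ?_ _); omega
  have hcr : ((pairSet d M).card : ℝ) ≤ 4 * Z + (((Finset.Ico (-(M:ℤ)) (M+1)).filter (fun l => ∀ p ∈ P, ¬ (p:ℤ) ∣ l * (l + d))).card : ℝ) := by
    exact_mod_cast hcard'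
  refine hcr.trans ?_
  rw [add_assoc]
  refine add_le_add le_rfl (hs.trans (add_le_add (mul_le_mul_of_nonneg_left (add_le_add ?_ ?_) (by positivity)) le_rfl))
  · exact Real.exp_le_exp.2 (by linarith)
  · exact Real.exp_le_exp.2 (by linarith)

lemma asym (ε : ℝ) (hε : 0 < ε) : ∀ᶠ s : ℝ in atTop,
    26 * (Real.exp s * Real.exp (-(Real.exp s / 2))) + 12 * Real.exp (-(0.2 * s)) ≤ ε := by
  have h1 : Tendsto (fun s : ℝ => Real.exp s * Real.exp (-(Real.exp s / 2))) atTop (𝓝 0) := by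
    have h := (Real.tendsto_pow_mul_exp_neg_atTop_nhds_zero 1).comp
      (Real.tendsto_exp_atTop.atTop_div_const (by norm_num : (0:ℝ) < 2))
    have h' := h.const_mul 2
    rw [mul_zero] at h'
    refine h'.congr fun s => ?_
    simp only [Function.comp, pow_one]; ring
  have h2 : Tendsto (fun s : ℝ => Real.exp (-(0.2 * s))) atTop (𝓝 0) :=
    Real.tendsto_exp_neg_atTop_nhds_zero.comp (tendsto_id.const_mul_atTop (by norm_num))
  have h3 := (h1.const_mul 26).add (h2.const_mul 12)
  norm_num at h3
  filter_upwards [h3.eventually (eventually_le_nhds (show (0:ℝ) < ε from hε))] with s hs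
  norm_num at hs ⊢
  exact hs

lemma asym2 : ∀ᶠ s : ℝ in atTop,
    2 * Real.exp (0.7 * s) * (4.8 * s + 8) ≤ Real.exp s / 2 := by
  have h2 : Tendsto (fun s : ℝ => s * Real.exp (-(0.3 * s))) atTop (𝓝 0) := by
    have h := (Real.tendsto_pow_mul_exp_neg_atTop_nhds_zero 1).comp
      (tendsto_id.const_mul_atTop (by norm_num : (0:ℝ) < 0.3))
    have h' := h.const_mul (1/0.3)
    rw [mul_zero] at h'
    refine h'.congr fun s => ?_
    simp only [Function.comp, pow_one, id]
    norm_num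
    ring
  filter_upwards [h2.eventually (eventually_le_nhds (show (0:ℝ) < 1/100 by norm_num)),
    eventually_ge_atTop 1] with s hs h1
  have e : Real.exp (0.7 * s) = Real.exp s * Real.exp (-(0.3 * s)) := by
    rw [← Real.exp_add]; congr 1; ring
  rw [e]
  have hp := Real.exp_pos s
  have hq := Real.exp_pos (-(0.3 * s))
  have : 2 * Real.exp (-(0.3 * s)) * (4.8 * s + 8) ≤ 1 / 2 := by nlinarith
  calc _ = Real.exp s * (2 * Real.exp (-(0.3 * s)) * (4.8 * s + 8)) := by ring
    _ ≤ Real.exp s * (1/2) := mul_le_mul_of_nonneg_left this hp.le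
    _ = _ := by ring

lemma pi_lower : ∀ᶠ M : ℕ in atTop, (1/2) * M / Real.log M ≤ (Nat.primeCounting M : ℝ) := by
  have h : ∀ᶠ x : ℝ in atTop, Real.log x ≤ 0.05 * x := by
    have := Real.isLittleO_log_id_atTop.bound (show (0:ℝ) < 0.05 by norm_num)
    filter_upwards [this, eventually_ge_atTop 1] with x hx h1
    have := (le_abs_self _).trans hx
    simpa [abs_of_nonneg (show (0:ℝ) ≤ x by linarith)] using this
  have h' := (tendsto_natCast_atTop_atTop (R := ℝ)).eventually
    ((tendsto_atTop_add_const_right atTop (1:ℝ) tendsto_id).eventually h)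
  filter_upwards [h', eventually_ge_atTop 2] with M hM h2
  have h2' : (2:ℝ) ≤ M := by exact_mod_cast h2
  refine le_trans ?_ (Chebyshev.pi_ge M)
  refine div_le_div_of_nonneg_right ?_ (Real.log_nonneg (by linarith))
  simp only [id] at hM
  have := Real.log_two_gt_d9
  nlinarith

lemma pairs_small (d : ℤ) (hd : d ≠ 0) (ε : ℝ) (hε : 0 < ε) :
    ∀ᶠ M : ℕ in atTop, ((pairSet d M).card : ℝ) ≤ ε * Nat.primeCounting M := by
  have hs : Tendsto (fun M : ℕ => Real.log (Real.log M)) atTop atTop :=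
    Real.tendsto_log_atTop.comp (Real.tendsto_log_atTop.comp tendsto_natCast_atTop_atTop)
  filter_upwards [hs.eventually (asym ε hε), hs.eventually asym2, pi_lower,
    hs.eventually_ge_atTop (10 * (1 + d.natAbs)), eventually_ge_atTop 3] with M h1 h2 h3 h4 h5
  set s := Real.log (Real.log M) with hsdef
  have hM3 : (3:ℝ) ≤ M := by exact_mod_cast h5
  have hlog : 0 < Real.log M := Real.log_pos (by linarith)
  have es : Real.exp s = Real.log M := Real.exp_log hlog
  have ees : Real.exp (Real.exp s) = M := by rw [es, Real.exp_log (by linarith)]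
  have hs1 : 1 ≤ s := by
    have : (0:ℝ) ≤ d.natAbs := by positivity
    linarith
  set Y := Real.exp (Real.exp (0.7 * s)) with hY
  have hY2 : 2 ≤ Y := by
    have : 1 ≤ Real.exp (0.7 * s) := Real.one_le_exp (by linarith)
    have := Real.add_one_le_exp (Real.exp (0.7 * s))
    linarith
  set Z := ⌈Y⌉₊ with hZ
  have hYZ : Y ≤ Z := Nat.le_ceil _
  have hZY : (Z:ℝ) < Y + 1 := Nat.ceil_lt_add_one (by linarith)
  have hZ2 : 2 ≤ Z := by exact_mod_cast hY2.trans hYZ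
  set k := ⌈2.4 * s + 3⌉₊ with hk
  have hk1 : 2.4 * s + 3 ≤ k := Nat.le_ceil _
  have hk2 : (k:ℝ) < 2.4 * s + 3 + 1 := Nat.ceil_lt_add_one (by linarith)
  have hllZ : 0.7 * s ≤ Real.log (Real.log Z) := by
    have a1 : Real.exp (0.7 * s) ≤ Real.log Z := by
      rw [Real.le_log_iff_exp_le (by linarith)]; exact hYZ
    rwa [Real.le_log_iff_exp_le ((Real.exp_pos _).trans_le a1)]
  have hb := pair_bound d hd M Z k hZ2 (0.6 * s) (by linarith) (by linarith)
  have hZexp : (Z:ℝ) ≤ Real.exp (2 * Real.exp (0.7 * s)) := by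
    have : Real.exp (2 * Real.exp (0.7 * s)) = Y * Y := by
      rw [hY, ← Real.exp_add]; congr 1; ring
    rw [this]; nlinarith
  have hZk : (Z:ℝ) ^ (2 * k) ≤ Real.exp (Real.exp s / 2) := by
    calc (Z:ℝ) ^ (2 * k) ≤ Real.exp (2 * Real.exp (0.7 * s)) ^ (2 * k) :=
          pow_le_pow_left₀ (by positivity) hZexp _
      _ = Real.exp ((2 * k : ℕ) * (2 * Real.exp (0.7 * s))) := by rw [Real.exp_nat_mul]
      _ ≤ _ := by
        apply Real.exp_le_exp.2
        refine le_trans ?_ h2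
        rw [mul_comm]
        refine mul_le_mul_of_nonneg_left ?_ (by positivity)
        push_cast; linarith
  have hZ1 : (Z:ℝ) ≤ (Z:ℝ) ^ (2 * k) := by
    refine le_self_pow₀ (by exact_mod_cast (by omega : 1 ≤ Z)) ?_
    have : (0:ℝ) < k := by linarith
    have : 0 < k := by exact_mod_cast this
    omega
  have he2 : Real.exp 2 ≤ 9 := by
    have : Real.exp 2 = Real.exp 1 * Real.exp 1 := by rw [← Real.exp_add]; norm_num
    rw [this]; nlinarith [Real.exp_one_lt_d9, Real.exp_pos 1]
  have hE1 : Real.exp (-2 * (0.6 * s)) = Real.exp (-(0.2 * s)) * Real.exp (-s) := by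
    rw [← Real.exp_add]; congr 1; ring
  have hE2 : Real.exp (6 * (0.6 * s + 1) - 2 * k) ≤ Real.exp (-(0.2 * s)) * Real.exp (-s) := by
    rw [← Real.exp_add]; apply Real.exp_le_exp.2; linarith
  have hens : Real.exp (-s) = 1 / Real.log M := by rw [Real.exp_neg, es, one_div]
  have hsq : Real.exp (Real.exp s / 2) = M * Real.exp (-(Real.exp s / 2)) := by
    rw [← ees, ← Real.exp_add]; congr 1
    ring
  have hfin : ((pairSet d M).card : ℝ) ≤ 13 * Real.exp (Real.exp s / 2)
      + (3 * M) * (2 * (Real.exp (-(0.2 * s)) * Real.exp (-s))) := by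
    refine hb.trans ?_
    have q1 : (2 * (M:ℝ) + 1) * (Real.exp (-2 * (0.6 * s)) + Real.exp (6 * (0.6 * s + 1) - 2 * k))
        ≤ (3 * M) * (2 * (Real.exp (-(0.2 * s)) * Real.exp (-s))) := by
      refine mul_le_mul (by linarith) (by linarith) (by positivity) (by positivity)
    have q2 : Real.exp 2 * (Z:ℝ) ^ (2 * k) ≤ 9 * Real.exp (Real.exp s / 2) :=
      mul_le_mul he2 hZk (by positivity) (by norm_num)
    linarith
  refine hfin.trans (le_trans ?_ (mul_le_mul_of_nonneg_left h3 hε.le))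
  calc _ = (26 * (Real.exp s * Real.exp (-(Real.exp s / 2))) + 12 * Real.exp (-(0.2 * s))) * ((1/2) * M / Real.log M) := by
        rw [hsq, hens, es]; field_simp; ring
    _ ≤ _ := mul_le_mul_of_nonneg_right h1 (by positivity)

lemma autoCorr_int (G : Finset ℤ) (f : ℝ → ℂ) :
    autoCorr ((fun l : ℤ => (l:ℝ)) '' (G : Set ℤ)) f =
      ((G.card : ℂ))⁻¹ * ∑ x ∈ G, ∑ y ∈ G, f ((x:ℝ) - y) := by
  classical
  have hinj : Function.Injective (fun l : ℤ => (l:ℝ)) := Int.cast_injective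
  have hsum : ∀ g : ℝ → ℂ, ∑ᶠ x ∈ ((fun l : ℤ => (l:ℝ)) '' (G : Set ℤ)), g x = ∑ x ∈ G, g x := by
    intro g
    rw [finsum_mem_image hinj.injOn, finsum_mem_coe_finset]
  unfold autoCorr
  rw [Set.ncard_image_of_injective _ hinj, Set.ncard_coe_finset, hsum]
  simp only [hsum]

lemma offdiag (G : Finset ℤ) (M R : ℕ) (hG : ∀ l ∈ G, l ∈ Finset.Ico (-(M:ℤ)) (M+1) ∧ l.natAbs.Prime)
    (f : ℝ → ℂ) (K : ℝ) (hK0 : 0 ≤ K) (hK : ∀ x, ‖f x‖ ≤ K) (hR : ∀ x : ℝ, (R:ℝ) < |x| → f x = 0) :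
    ‖∑ x ∈ G, ∑ y ∈ G, f ((x:ℝ) - y) - G.card * f 0‖
      ≤ ∑ d ∈ (Finset.Icc (-(R:ℤ)) R).erase 0, K * ((pairSet d M).card : ℝ) := by
  classical
  set E := (Finset.Icc (-(R:ℤ)) R).erase 0
  have h1 : ∑ x ∈ G, ∑ y ∈ G, f ((x:ℝ) - y) - G.card * f 0
      = ∑ y ∈ G, ∑ x ∈ G.erase y, f ((x:ℝ) - y) := by
    rw [Finset.sum_comm, ← nsmul_eq_mul, ← Finset.sum_const, ← Finset.sum_sub_distrib]
    refine Finset.sum_congr rfl fun y hy => ?_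
    rw [← Finset.add_sum_erase G _ hy]
    simp
  rw [h1]
  calc _ ≤ ∑ y ∈ G, ∑ x ∈ G.erase y, ‖f ((x:ℝ) - y)‖ :=
        (norm_sum_le _ _).trans (Finset.sum_le_sum fun y _ => norm_sum_le _ _)
    _ ≤ ∑ y ∈ G, ∑ x ∈ G.erase y, ∑ d ∈ E, (if x = y + d then K else 0) := by
        refine Finset.sum_le_sum fun y _ => Finset.sum_le_sum fun x hx => ?_
        have hne := Finset.ne_of_mem_erase hx
        have hnn : ∀ d ∈ E, (0:ℝ) ≤ (if x = y + d then K else 0) := fun d _ => by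
          split_ifs <;> simp [hK0]
        by_cases hm : x - y ∈ E
        · refine le_trans ?_ (Finset.single_le_sum hnn hm)
          simpa using hK _
        · have : f ((x:ℝ) - y) = 0 := by
            apply hR
            by_contra hcon
            push Not at hcon
            apply hm
            rw [Finset.mem_erase, Finset.mem_Icc]
            have hc : |x - y| ≤ (R:ℤ) := by exact_mod_cast hcon
            rw [abs_le] at hc
            exact ⟨sub_ne_zero.2 hne, hc⟩
          rw [this, norm_zero]
          exact Finset.sum_nonneg hnn
    _ ≤ ∑ y ∈ G, ∑ x ∈ G, ∑ d ∈ E, (if x = y + d then K else 0) := by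
        refine Finset.sum_le_sum fun y _ => Finset.sum_le_sum_of_subset_of_nonneg
          (Finset.erase_subset _ _) fun x _ _ => Finset.sum_nonneg fun d _ => ?_
        split_ifs <;> simp [hK0]
    _ = ∑ d ∈ E, ∑ y ∈ G, (if y + d ∈ G then K else 0) := by
        rw [Finset.sum_comm]
        rw [Finset.sum_comm (s := E)]
        rw [Finset.sum_comm]
        refine Finset.sum_congr rfl fun y _ => ?_
        rw [Finset.sum_comm]
        refine Finset.sum_congr rfl fun d _ => ?_
        rw [Finset.sum_ite_eq']
    _ ≤ _ := by
        refine Finset.sum_le_sum fun d _ => ?_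
        rw [← Finset.sum_filter, Finset.sum_const, nsmul_eq_mul, mul_comm]
        refine mul_le_mul_of_nonneg_left ?_ hK0
        have : G.filter (fun y => y + d ∈ G) ⊆ pairSet d M := by
          intro y hy
          rw [Finset.mem_filter] at hy
          exact Finset.mem_filter.2 ⟨(hG y hy.1).1, (hG y hy.1).2, (hG _ hy.2).2⟩
        exact_mod_cast Finset.card_le_card this

lemma exists_G (a b : ℝ) (ha : a ≤ 0) (hb : 0 ≤ b) : ∃ G : Finset ℤ,
    PrimesR ∩ Set.Icc a b = (fun l : ℤ => (l:ℝ)) '' (G : Set ℤ) ∧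
    (∀ l ∈ G, l ∈ Finset.Ico (-(⌊max b (-a)⌋₊:ℤ)) (⌊max b (-a)⌋₊+1) ∧ l.natAbs.Prime) ∧
    Nat.primeCounting ⌊max b (-a)⌋₊ ≤ G.card := by
  classical
  set M := ⌊max b (-a)⌋₊ with hM
  have hmax : 0 ≤ max b (-a) := le_max_of_le_left hb
  have hle : (M:ℝ) ≤ max b (-a) := Nat.floor_le hmax
  refine ⟨(Finset.Ico (-(M:ℤ)) (M+1)).filter (fun l => l.natAbs.Prime ∧ a ≤ l ∧ (l:ℝ) ≤ b), ?_, ?_, ?_⟩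
  · ext x
    simp only [PrimesR, Set.mem_inter_iff, Set.mem_ofPred_eq, Set.mem_Icc, Set.mem_image,
      Finset.mem_coe, Finset.mem_filter, Finset.mem_Ico]
    constructor
    · rintro ⟨⟨p, hp, rfl | rfl⟩, h1, h2⟩
      · have : p ≤ M := Nat.le_floor (h2.trans (le_max_left _ _))
        exact ⟨p, ⟨⟨by omega, by omega⟩, by simpa using hp, by simpa using h1, by simpa using h2⟩, by simp⟩
      · have : p ≤ M := Nat.le_floor (le_trans (by linarith) (le_max_right _ _))
        exact ⟨-p, ⟨⟨by omega, by omega⟩, by simpa using hp, by simpa using h1, by simpa using h2⟩, by simp⟩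
    · rintro ⟨l, ⟨_, hp, h1, h2⟩, rfl⟩
      refine ⟨⟨l.natAbs, hp, ?_⟩, h1, h2⟩
      rcases Int.natAbs_eq l with h | h
      · left; simpa using congrArg (fun z : ℤ => (z:ℝ)) h
      · right; simpa using congrArg (fun z : ℤ => (z:ℝ)) h
  · intro l hl
    rw [Finset.mem_filter] at hl
    exact ⟨hl.1, hl.2.1⟩
  · rw [Nat.primeCounting, Nat.primeCounting', Nat.count_eq_card_filter_range]
    rcases le_total (-a) b with h | h
    · rw [max_eq_left h] at hle
      refine Finset.card_le_card_of_injOn (fun p => (p:ℤ)) ?_ (fun x _ y _ h => by simpa using h)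
      intro p hp
      simp only [Finset.coe_filter, Finset.mem_range, Set.mem_ofPred_eq] at hp
      have : (p:ℝ) ≤ M := by exact_mod_cast (by omega : p ≤ M)
      have h0 : (0:ℝ) ≤ p := by positivity
      simp only [Finset.coe_filter, Finset.mem_Ico, Set.mem_ofPred_eq]
      refine ⟨⟨by omega, by omega⟩, by simpa using hp.2, ?_, ?_⟩ <;> push_cast <;> linarith
    · rw [max_eq_right h] at hle
      refine Finset.card_le_card_of_injOn (fun p => -(p:ℤ)) ?_ (fun x _ y _ h => by simpa using h)
      intro p hp
      simp only [Finset.coe_filter, Finset.mem_range, Set.mem_ofPred_eq] at hp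
      have : (p:ℝ) ≤ M := by exact_mod_cast (by omega : p ≤ M)
      have h0 : (0:ℝ) ≤ p := by positivity
      simp only [Finset.coe_filter, Finset.mem_Ico, Set.mem_ofPred_eq]
      refine ⟨⟨by omega, by omega⟩, by simpa using hp.2, ?_, ?_⟩ <;> push_cast <;> linarith

theorem primes_counting_autocorrelation_zero_in_intervals
    (a b : ℕ → ℝ) (h0 : ∀ n, a n ≤ 0 ∧ 0 ≤ b n)
    (hw : Tendsto (fun n => b n - a n) atTop atTop) :
    ∀ f : ℝ → ℂ, Continuous f → HasCompactSupport f →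
      Tendsto (fun n => autoCorr (PrimesR ∩ Set.Icc (a n) (b n)) f) atTop (nhds (f 0)) := by
  intro f hf hfc
  obtain ⟨K, hK⟩ := hfc.exists_bound_of_continuous hf
  have hK0 : 0 ≤ K := (norm_nonneg _).trans (hK 0)
  obtain ⟨R, hR⟩ : ∃ R : ℕ, ∀ x : ℝ, (R:ℝ) < |x| → f x = 0 := by
    obtain ⟨r, hr⟩ := hfc.isCompact.isBounded.subset_closedBall (0:ℝ)
    obtain ⟨R, hR⟩ := exists_nat_ge r
    refine ⟨R, fun x hx => ?_⟩
    by_contra hne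
    have := hr (subset_tsupport f hne)
    rw [mem_closedBall_zero_iff, Real.norm_eq_abs] at this
    linarith
  have hMt : Tendsto (fun n => ⌊max (b n) (-(a n))⌋₊) atTop atTop := by
    refine tendsto_nat_floor_atTop.comp ?_
    refine tendsto_atTop_mono (fun n => ?_) (hw.atTop_div_const (by norm_num : (0:ℝ) < 2))
    have h1 := le_max_left (b n) (-(a n))
    have h2 := le_max_right (b n) (-(a n))
    linarith
  rw [Metric.tendsto_nhds]
  intro ε hε
  set E := (Finset.Icc (-(R:ℤ)) R).erase 0 with hE
  set ε' := ε / (K * E.card + 1) with hε'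
  have hden : 0 < K * E.card + 1 := by positivity
  have hε'0 : 0 < ε' := by positivity
  have hev : ∀ᶠ M : ℕ in atTop, ∀ d ∈ E, ((pairSet d M).card : ℝ) ≤ ε' * Nat.primeCounting M := by
    rw [Finset.eventually_all]
    intro d hd
    exact pairs_small d (Finset.ne_of_mem_erase hd) ε' hε'0
  filter_upwards [hMt.eventually hev, hMt.eventually_ge_atTop 2] with n hn h2
  obtain ⟨G, hG1, hG2, hG3⟩ := exists_G (a n) (b n) (h0 n).1 (h0 n).2
  set M := ⌊max (b n) (-(a n))⌋₊
  have hpi : 0 < Nat.primeCounting M := by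
    have := Nat.monotone_primeCounting h2
    have h3 : Nat.primeCounting 2 = 1 := by decide
    omega
  have hGpos : 0 < G.card := by omega
  have hGr : (0:ℝ) < G.card := by exact_mod_cast hGpos
  have hGc : (G.card : ℂ) ≠ 0 := by exact_mod_cast hGpos.ne'
  have hoff := offdiag G M R hG2 f K hK0 hK hR
  rw [hG1, autoCorr_int, dist_eq_norm]
  set S := ∑ x ∈ G, ∑ y ∈ G, f ((x:ℝ) - y)
  have e : (G.card : ℂ)⁻¹ * S - f 0 = (G.card : ℂ)⁻¹ * (S - G.card * f 0) := by
    field_simp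
  rw [e, norm_mul, norm_inv, Complex.norm_natCast, inv_mul_lt_iff₀ hGr]
  refine hoff.trans_lt ?_
  have hpG : (Nat.primeCounting M : ℝ) ≤ G.card := by exact_mod_cast hG3
  calc ∑ d ∈ E, K * ((pairSet d M).card : ℝ) ≤ ∑ d ∈ E, K * (ε' * G.card) := by
        refine Finset.sum_le_sum fun d hd => mul_le_mul_of_nonneg_left ((hn d hd).trans ?_) hK0
        exact mul_le_mul_of_nonneg_left hpG hε'0.le
    _ = (K * E.card) * ε' * G.card := by rw [Finset.sum_const, nsmul_eq_mul]; ring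
    _ < ε * G.card := by
        refine mul_lt_mul_of_pos_right ?_ hGr
        have : ε = (K * E.card + 1) * ε' := by rw [hε']; field_simp
        linarith
    _ = _ := by ring
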